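/- Let q ∈ ℂ with 0 < |q| < 1 and let r ∈ ℕ. Then (1 − s) · Σ_{k=0}^∞ s^{2k} / ((q;q)_k (q;q)_{k+r}) tends to 1/(2 (q;q)_∞²) as the real variable s tends to 1 from the left within (0,1). -/

import Mathlib

open Finset Filter

/-- Finite q-Pochhammer symbol `(x;q)_k = ∏_{j=0}^{k-1} (1 - x q^j)`. -/
noncomputable def qPoch (x q : ℂ) (k : ℕ) : ℂ := ∏ j ∈ Finset.range k, (1 - x * q ^ j)

/-- Infinite q-Pochhammer symbol `(x;q)_∞ = ∏_{j=0}^{∞} (1 - x q^j)`. -/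
noncomputable def qPochInf (x q : ℂ) : ℂ := ∏' j : ℕ, (1 - x * q ^ j)

/-- The Jacobi theta function `θ(t;q) = Σ_{k∈ℤ} (−1)^k q^{k(k+1)/2} t^k`. -/
noncomputable def jtheta (t q : ℂ) : ℂ :=
  ∑' k : ℤ, (-1 : ℂ) ^ k * q ^ (k * (k + 1) / 2) * t ^ k

/-- The derivative `θ'(t;q) = Σ_{k∈ℤ} (−1)^k k q^{k(k+1)/2} t^k` (with respect to t d/dt). -/
noncomputable def jthetaD (t q : ℂ) : ℂ :=
  ∑' k : ℤ, (-1 : ℂ) ^ k * (k : ℂ) * q ^ (k * (k + 1) / 2) * t ^ k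

/-- The Eisenstein-type series `E₁(q) = 1 − 4 Σ_{j=1}^∞ q^j/(1−q^j)`. -/
noncomputable def E1 (q : ℂ) : ℂ := 1 - 4 * ∑' j : ℕ, q ^ (j + 1) / (1 - q ^ (j + 1))

/-- The Appell-Lerch sum
`AL(t,λ,q) = θ(λ;q)⁻¹ Σ_{ℓ∈ℤ} (−1)^ℓ q^{ℓ(ℓ+1)/2} λ^ℓ / (1 − λ t q^ℓ)`. -/
noncomputable def AL (t lam q : ℂ) : ℂ :=
  (jtheta lam q)⁻¹ *
    ∑' k : ℤ, (-1 : ℂ) ^ k * q ^ (k * (k + 1) / 2) * lam ^ k / (1 - lam * t * q ^ k)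

/-- The solution `g^{(0,0)}(t,q) = Σ_{k≥0} (−1)^k q^{k(k+1)/2} (q;q)_k^{−2} t^{−1−k}`. -/
noncomputable def g00 (t q : ℂ) : ℂ :=
  ∑' k : ℕ, (-1 : ℂ) ^ k * q ^ (k * (k + 1) / 2) / (qPoch q q k) ^ 2 * t ^ (-1 - (k : ℤ))

/-- The solution `g^{(0,1)}(t,q)`. -/
noncomputable def g01 (t q : ℂ) : ℂ :=
  ∑' k : ℕ,
    (E1 q / 2 - 1 / 2 - jthetaD t⁻¹ q / jtheta t⁻¹ q +
        ∑ j ∈ Finset.range k, (1 + q ^ (j + 1)) / (1 - q ^ (j + 1))) *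
      ((-1 : ℂ) ^ k * q ^ (k * (k + 1) / 2) / (qPoch q q k) ^ 2 * t ^ (-1 - (k : ℤ)))

/-!
If `a k → L`, then `(1 - x) ∑ a k x ^ k = a 0 + x ∑ (a (k + 1) - a k) x ^ k`, and Abel's limit
theorem applied to the telescoping series `∑ (a (k + 1) - a k) = L - a 0` shows that this tends to
`L` as `x → 1⁻`. Substituting `x = s ^ m` and dividing by `1 + s + ⋯ + s ^ (m - 1) → m` gives
`(1 - s) ∑ a k s ^ (m k) → L / m`. The theorem is the case `m = 2` with
`a k = 1 / ((q;q)_k (q;q)_{k+r}) → 1 / (q;q)_∞²`.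
-/

open scoped Topology

section AbelMeans

theorem one_sub_mul_tsum_mul_pow {R : Type*} [CommRing R] [TopologicalSpace R]
    [IsTopologicalRing R] [T2Space R] {a : ℕ → R} {x : R}
    (h : Summable fun k ↦ a k * x ^ k) :
    (1 - x) * ∑' k, a k * x ^ k = a 0 + ∑' k, (a (k + 1) - a k) * x ^ (k + 1) := by
  have h_succ : Summable fun k ↦ a (k + 1) * x ^ (k + 1) := (summable_nat_add_iff 1).2 h
  calc (1 - x) * ∑' k, a k * x ^ k
      = ∑' k, a k * x ^ k - x * ∑' k, a k * x ^ k := by ring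
    _ = a 0 + (∑' k, a (k + 1) * x ^ (k + 1) - ∑' k, x * (a k * x ^ k)) := by
      rw [h.tsum_mul_left x]
      nth_rw 1 [h.tsum_eq_zero_add]
      ring
    _ = a 0 + ∑' k, (a (k + 1) - a k) * x ^ (k + 1) := by
      rw [← h_succ.tsum_sub (h.mul_left x)]
      congr! 3
      ring

theorem summable_mul_pow_of_isBigO_one {R : Type*} [NormedRing R] [CompleteSpace R]
    {a : ℕ → R} (ha : a =O[atTop] fun _ ↦ (1 : ℝ)) {x : R} (hx : ‖x‖ < 1) :
    Summable fun k ↦ a k * x ^ k := by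
  refine summable_of_isBigO_nat (summable_norm_geometric_of_norm_lt_one hx) ?_
  simpa only [one_mul] using ha.mul (Asymptotics.isBigO_refl (fun k ↦ x ^ k) atTop).norm_right

theorem tendsto_pow_nhdsLT_one {R : Type*} [Semiring R] [LinearOrder R] [IsStrictOrderedRing R]
    [TopologicalSpace R] [ClosedIicTopology R] [ContinuousMul R] {m : ℕ} (hm : m ≠ 0) :
    Tendsto (fun s : R ↦ s ^ m) (𝓝[<] 1) (𝓝[<] 1) := by
  refine tendsto_nhdsWithin_iff.2
    ⟨((continuous_pow m).tendsto' 1 1 (one_pow m)).mono_left nhdsWithin_le_nhds, ?_⟩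
  filter_upwards [Ioo_mem_nhdsLT zero_lt_one] with s hs
  exact pow_lt_one₀ hs.1.le hs.2 hm

variable {a : ℕ → ℂ} {L : ℂ}

theorem tendsto_one_sub_mul_tsum_mul_pow_nhdsWithin_stolzSet (ha : Tendsto a atTop (𝓝 L)) {M : ℝ} :
    Tendsto (fun z : ℂ ↦ (1 - z) * ∑' k, a k * z ^ k) (𝓝[Complex.stolzSet M] 1) (𝓝 L) := by
  have h_telescope : Tendsto (fun n ↦ ∑ k ∈ range n, (a (k + 1) - a k)) atTop (𝓝 (L - a 0)) := by
    simpa only [sum_range_sub] using ha.sub_const (a 0)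
  have h_id : Tendsto (fun z : ℂ ↦ z) (𝓝[Complex.stolzSet M] 1) (𝓝 1) :=
    tendsto_id.mono_left nhdsWithin_le_nhds
  have h_abel := (h_id.mul
    (Complex.tendsto_tsum_powerSeries_nhdsWithin_stolzSet h_telescope)).const_add (a 0)
  rw [one_mul, add_sub_cancel] at h_abel
  refine h_abel.congr' ?_
  filter_upwards [self_mem_nhdsWithin] with z hz
  rw [one_sub_mul_tsum_mul_pow (summable_mul_pow_of_isBigO_one (ha.isBigO_one ℝ) hz.1),
    ← tsum_mul_left]
  congr! 3
  ring

theorem tendsto_one_sub_mul_tsum_mul_pow_nhdsLT (ha : Tendsto a atTop (𝓝 L)) :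
    Tendsto (fun x : ℝ ↦ (1 - (x : ℂ)) * ∑' k, a k * (x : ℂ) ^ k) (𝓝[<] 1) (𝓝 L) :=
  (tendsto_one_sub_mul_tsum_mul_pow_nhdsWithin_stolzSet ha).comp <|
    tendsto_map.mono_right (Complex.nhdsWithin_lt_le_nhdsWithin_stolzSet one_lt_two)

theorem tendsto_one_sub_mul_tsum_mul_pow_mul_nhdsLT (ha : Tendsto a atTop (𝓝 L)) {m : ℕ}
    (hm : m ≠ 0) :
    Tendsto (fun s : ℝ ↦ (1 - (s : ℂ)) * ∑' k, a k * (s : ℂ) ^ (m * k)) (𝓝[<] 1)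
      (𝓝 (L / m)) := by
  have h_mean := (tendsto_one_sub_mul_tsum_mul_pow_nhdsLT ha).comp (tendsto_pow_nhdsLT_one hm)
  have h_geom : Tendsto (fun s : ℝ ↦ ∑ i ∈ range m, (s : ℂ) ^ i) (𝓝[<] 1) (𝓝 m) :=
    (Continuous.tendsto' (by fun_prop) 1 _ (by simp)).mono_left nhdsWithin_le_nhds
  refine (h_mean.div h_geom (Nat.cast_ne_zero.2 hm)).congr' ?_
  filter_upwards [h_geom.eventually_ne (Nat.cast_ne_zero.2 hm)] with s hs
  rw [Pi.div_apply, Function.comp_apply, div_eq_iff hs, Complex.ofReal_pow, ← mul_neg_geom_sum]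
  simp only [pow_mul]
  ring

end AbelMeans

section QPochhammer

theorem summable_norm_neg_mul_pow {K : Type*} [NormedDivisionRing K] (x : K) {q : K}
    (hq : ‖q‖ < 1) : Summable fun j : ℕ ↦ ‖-(x * q ^ j)‖ := by
  simpa only [norm_neg, norm_mul] using (summable_norm_geometric_of_norm_lt_one hq).mul_left ‖x‖

variable {q : ℂ}

theorem tendsto_qPoch_atTop (x : ℂ) (hq : ‖q‖ < 1) :
    Tendsto (fun k ↦ qPoch x q k) atTop (𝓝 (qPochInf x q)) := by
  simpa only [qPoch, qPochInf, ← sub_eq_add_neg] using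
    (multipliable_one_add_of_summable (summable_norm_neg_mul_pow x hq)).hasProd.tendsto_prod_nat

theorem qPochInf_ne_zero {x : ℂ} (hq : ‖q‖ < 1) (hx : ∀ j : ℕ, x * q ^ j ≠ 1) :
    qPochInf x q ≠ 0 := by
  simpa only [qPochInf, ← sub_eq_add_neg] using
    tprod_one_add_ne_zero_of_summable (f := fun j : ℕ ↦ -(x * q ^ j))
      (fun j ↦ by simpa only [← sub_eq_add_neg] using sub_ne_zero.2 (hx j).symm)
      (summable_norm_neg_mul_pow x hq)

theorem qPochInf_self_ne_zero (hq : ‖q‖ < 1) : qPochInf q q ≠ 0 := by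
  refine qPochInf_ne_zero hq fun j h ↦ ?_
  have h_lt : ‖q ^ (j + 1)‖ < 1 := by
    simpa only [norm_pow] using pow_lt_one₀ (norm_nonneg q) hq j.succ_ne_zero
  rw [pow_succ', h, norm_one] at h_lt
  exact h_lt.false

end QPochhammer

/-- `(1 − s) · Σ_{k≥0} s^{2k}/((q;q)_k (q;q)_{k+r})` tends to `1/(2 (q;q)_∞²)`
as the real variable `s` tends to `1` from the left within `(0,1)`. -/
theorem aux_H_limit
    (q : ℂ) (hq0 : 0 < ‖q‖) (hq1 : ‖q‖ < 1) (r : ℕ) :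
    Tendsto
      (fun s : ℝ =>
        (1 - (s : ℂ)) * ∑' k : ℕ, (s : ℂ) ^ (2 * k) / (qPoch q q k * qPoch q q (k + r)))
      (nhdsWithin 1 (Set.Ioo (0 : ℝ) 1))
      (nhds (1 / (2 * qPochInf q q ^ 2))) := by
  have h_qPoch := tendsto_qPoch_atTop q hq1
  have h_coeff : Tendsto (fun k ↦ (qPoch q q k * qPoch q q (k + r))⁻¹) atTop
      (𝓝 (qPochInf q q * qPochInf q q)⁻¹) :=
    (h_qPoch.mul ((tendsto_add_atTop_iff_nat r).2 h_qPoch)).inv₀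
      (mul_self_ne_zero.2 (qPochInf_self_ne_zero hq1))
  have h_mean := tendsto_one_sub_mul_tsum_mul_pow_mul_nhdsLT h_coeff two_ne_zero
  rw [nhdsWithin_Ioo_eq_nhdsLT zero_lt_one]
  convert h_mean using 1
  · simp only [div_eq_inv_mul]
  · rw [Nat.cast_ofNat, one_div, mul_inv_rev, div_eq_mul_inv, sq]
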